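/- Let (X, 𝒯, P, ≤, {σ_x : x ∈ X}) be a p-symmetrically typed topological space for a type p ∈ P, and suppose the assignment σ has least p-neighborhood. Then for every x ∈ X, the type-p-connected component equals the transitive p-closure of x: p⊢C(x) = p⊢tr(x). -/

import Mathlib

open Set

/-- A typed topological space: a topological space `X` together with a partially
ordered set `P` of types and, for each `x : X`, a partial assignment `σ x` of
types to open sets containing `x`, such that on its domain the assignment is
order-reflecting: `σ x U ≤ σ x V ↔ U ⊆ V`. -/
structure TypedSpace (X : Type*) (P : Type*) [TopologicalSpace X] [PartialOrder P] where
  σ : X → Set X → Option P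
  dom_mem : ∀ x U p, σ x U = some p → IsOpen U ∧ x ∈ U
  mono : ∀ x U V pU pV, σ x U = some pU → σ x V = some pV → (pU ≤ pV ↔ U ⊆ V)

namespace TypedSpace

variable {X P : Type*} [TopologicalSpace X] [PartialOrder P]

/-- `U` is a type-`p` open neighborhood of `x`, written `p ⊢ U(x)`. -/
def IsNbhd (T : TypedSpace X P) (p : P) (x : X) (U : Set X) : Prop :=
  T.σ x U = some p

/-- `x` is a `p`-accumulation point of `A`: every type-`p` open neighborhood
of `x` meets `A`. -/
def IsAccPt (T : TypedSpace X P) (p : P) (A : Set X) (x : X) : Prop :=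
  ∀ U, T.IsNbhd p x U → (U ∩ A).Nonempty

/-- The direct `p`-closure `p⊢CL₁(A) = A ∪ {x : x is a p-accumulation point of A}`. -/
def CL1 (T : TypedSpace X P) (p : P) (A : Set X) : Set X :=
  A ∪ {x | T.IsAccPt p A x}

/-- Iterated `p`-closures: `p⊢CL₀(A) = A`, `p⊢CLₙ₊₁(A) = p⊢CL₁(p⊢CLₙ(A))`. -/
def CLn (T : TypedSpace X P) (p : P) : ℕ → Set X → Set X
  | 0, A => A
  | n + 1, A => T.CL1 p (T.CLn p n A)

/-- The transitive `p`-closure `p⊢tr(A) = ⋃ₙ p⊢CLₙ(A)`. -/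
def tr (T : TypedSpace X P) (p : P) (A : Set X) : Set X :=
  ⋃ n, T.CLn p n A

/-- The tracks: `p⊢Track₀(A) = A`, and `p⊢Trackᵢ(A) = p⊢CLᵢ(A) \ p⊢CLᵢ₋₁(A)` for `i ≥ 1`. -/
def Track (T : TypedSpace X P) (p : P) (i : ℕ) (A : Set X) : Set X :=
  if i = 0 then A else T.CLn p i A \ T.CLn p (i - 1) A

/-- `Umin` assigns to each point a least type-`p` open neighborhood. -/
def HasLeast (T : TypedSpace X P) (p : P) (Umin : X → Set X) : Prop :=
  ∀ x, T.IsNbhd p x (Umin x) ∧ ∀ V, T.IsNbhd p x V → Umin x ⊆ V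

/-- The type of English-text "σ has least p-neighborhood": some least neighborhood
assignment exists. -/
def HasLeastNbhd (T : TypedSpace X P) (p : P) : Prop :=
  ∃ Umin : X → Set X, T.HasLeast p Umin

/-- `A` is type-`p`-connected: there do not exist two collections of type-`p`
open neighborhoods `{p⊢U(xᵢ) : i ∈ I}`, `{p⊢V(xⱼ) : j ∈ J}` with `I, J` nonempty,
`A = {xᵢ} ∪ {xⱼ}` and `(⋃ U(xᵢ)) ∩ (⋃ V(xⱼ)) = ∅`. -/
def Connected (T : TypedSpace X P) (p : P) (A : Set X) : Prop :=
  ¬ ∃ (s t : Set X) (U V : X → Set X),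
      s.Nonempty ∧ t.Nonempty ∧ A = s ∪ t ∧
      (∀ x ∈ s, T.IsNbhd p x (U x)) ∧ (∀ y ∈ t, T.IsNbhd p y (V y)) ∧
      (⋃ x ∈ s, U x) ∩ (⋃ y ∈ t, V y) = ∅

/-- The type-`p`-connected component of `x`: the union of all type-`p`-connected
subsets containing `x`. -/
def Comp (T : TypedSpace X P) (p : P) (x : X) : Set X :=
  ⋃₀ {A : Set X | x ∈ A ∧ T.Connected p A}

/-- The space is `p`-symmetrically typed. -/
def SymTyped (T : TypedSpace X P) (p : P) : Prop :=
  ∀ x y : X, (∃ U, T.IsNbhd p x U ∧ y ∉ U) → ∃ V, T.IsNbhd p y V ∧ x ∉ V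

/-- `D` and `D'` are `p`-closure disjoint. -/
def ClosureDisjoint (T : TypedSpace X P) (p : P) (D D' : Set X) : Prop :=
  T.tr p D ∩ T.tr p D' = ∅

/-- `D` is `p`-closure connected: it cannot be partitioned into two nonempty
`p`-closure disjoint subsets. -/
def ClosureConnected (T : TypedSpace X P) (p : P) (D : Set X) : Prop :=
  ¬ ∃ E E' : Set X, E.Nonempty ∧ E'.Nonempty ∧ E ∪ E' = D ∧ E ∩ E' = ∅ ∧
      T.ClosureDisjoint p E E'

/-- The cluster `p⊢tr(x)` is straight. -/
def StraightAt (T : TypedSpace X P) (p : P) (x : X) : Prop :=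
  ∀ i j : ℕ, 0 < i → i < j → ∀ y z : X,
    y ∈ T.Track p i {x} → z ∈ T.Track p j {x} →
      y ∈ T.CL1 p {z} → z ∈ T.CL1 p {y}

/-- `X` is `p`-straight: every cluster `p⊢tr(x)` is straight. -/
def Straight (T : TypedSpace X P) (p : P) : Prop :=
  ∀ x : X, T.StraightAt p x

/-- `X` is `(p, q)`-uniformly typed. -/
def UniformlyTyped (T : TypedSpace X P) (p q : P) : Prop :=
  ∀ (x : X) (j k : ℕ), (T.CLn p j {x} ∩ T.CLn q k {x}).Nonempty →
    T.CLn p j {x} ⊆ T.CLn q k {x}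

/-- The cluster `q⊢tr(x)` is `(p,q)`-straight: for `y, z, w ∈ q⊢tr(x)` with
`z, w ∈ p⊢tr(y)`, `index_{p,y}(z) ≤ index_{p,y}(w)` implies
`index_{q,y}(z) ≤ index_{q,y}(w)` (indices being the track numbers). -/
def PQStraightAt (T : TypedSpace X P) (p q : P) (x : X) : Prop :=
  ∀ y z w : X, y ∈ T.tr q {x} → z ∈ T.tr q {x} → w ∈ T.tr q {x} →
    z ∈ T.tr p {y} → w ∈ T.tr p {y} →
    ∀ iz iw : ℕ, z ∈ T.Track p iz {y} → w ∈ T.Track p iw {y} → iz ≤ iw →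
      ∀ jz jw : ℕ, z ∈ T.Track q jz {y} → w ∈ T.Track q jw {y} → jz ≤ jw

end TypedSpace

namespace TypedSpace

variable {X P : Type*} [TopologicalSpace X] [PartialOrder P]

theorem subset_tr (T : TypedSpace X P) (p : P) (A : Set X) : A ⊆ T.tr p A :=
  fun _ ha => mem_iUnion.2 ⟨0, ha⟩

/-- A point whose least neighborhood meets the transitive closure belongs to it. -/
theorem HasLeast.mem_tr {T : TypedSpace X P} {p : P} {Umin : X → Set X}
    (h : T.HasLeast p Umin) {A : Set X} {w y : X} (hw : w ∈ T.tr p A) (hwy : w ∈ Umin y) :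
    y ∈ T.tr p A := by
  obtain ⟨n, hn⟩ := mem_iUnion.1 hw
  exact mem_iUnion.2 ⟨n + 1, Or.inr fun V hV => ⟨w, (h y).2 V hV hwy, hn⟩⟩

theorem HasLeast.mem_symm {T : TypedSpace X P} {p : P} {Umin : X → Set X}
    (h : T.HasLeast p Umin) (hsym : T.SymTyped p) {x y : X} (hxy : x ∈ Umin y) :
    y ∈ Umin x := by
  by_contra hyx
  obtain ⟨V, hV, hxV⟩ := hsym x y ⟨Umin x, (h x).1, hyx⟩
  exact hxV ((h y).2 V hV hxy)

/-- A connected set containing `x` is contained in the transitive closure of `x`. -/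
theorem Connected.subset_tr {T : TypedSpace X P} {p : P} {A : Set X}
    (hA : T.Connected p A) (hsym : T.SymTyped p) (hleast : T.HasLeastNbhd p)
    {x : X} (hx : x ∈ A) : A ⊆ T.tr p {x} := by
  obtain ⟨Umin, h⟩ := hleast
  intro y hy
  by_contra hyx
  refine hA ⟨A ∩ T.tr p {x}, A \ T.tr p {x}, Umin, Umin, ⟨x, hx, T.subset_tr p {x} rfl⟩,
    ⟨y, hy, hyx⟩, (inter_union_sdiff A _).symm, fun a _ => (h a).1, fun a _ => (h a).1, ?_⟩
  refine eq_empty_of_forall_notMem fun w ⟨hws, hwt⟩ => ?_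
  obtain ⟨a, ha, hwa⟩ := mem_iUnion₂.1 hws
  obtain ⟨b, hb, hwb⟩ := mem_iUnion₂.1 hwt
  exact hb.2 (h.mem_tr (h.mem_tr ha.2 (h.mem_symm hsym hwa)) hwb)

/-- If neighborhoods of the points of `s` and `t` separate `s ∪ t = p⊢tr(A)` and `A ⊆ s`,
then `p⊢tr(A) ⊆ s`. -/
theorem tr_subset_of_separated {T : TypedSpace X P} {p : P} {A s t : Set X} {U V : X → Set X}
    (hst : T.tr p A = s ∪ t) (hU : ∀ x ∈ s, T.IsNbhd p x (U x))
    (hV : ∀ y ∈ t, T.IsNbhd p y (V y)) (hd : (⋃ x ∈ s, U x) ∩ (⋃ y ∈ t, V y) = ∅)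
    (hA : A ⊆ s) : T.tr p A ⊆ s := by
  refine iUnion_subset fun n => ?_
  induction n with
  | zero => exact hA
  | succ n ih =>
    intro y hy
    have hyst : y ∈ s ∪ t := hst ▸ mem_iUnion.2 ⟨n + 1, hy⟩
    refine hyst.resolve_right fun hyt => ?_
    have hmeet : ∃ w ∈ V y, w ∈ s := by
      rcases hy with hy | hy
      · exact ⟨y, (T.dom_mem _ _ _ (hV y hyt)).2, ih hy⟩
      · obtain ⟨w, hwV, hw⟩ := hy _ (hV y hyt)
        exact ⟨w, hwV, ih hw⟩
    obtain ⟨w, hwV, hws⟩ := hmeet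
    exact (eq_empty_iff_forall_notMem.1 hd) w
      ⟨mem_iUnion₂.2 ⟨w, hws, (T.dom_mem _ _ _ (hU w hws)).2⟩, mem_iUnion₂.2 ⟨y, hyt, hwV⟩⟩

theorem connected_tr_singleton (T : TypedSpace X P) (p : P) (x : X) :
    T.Connected p (T.tr p {x}) := by
  rintro ⟨s, t, U, V, ⟨a, ha⟩, ⟨b, hb⟩, hst, hU, hV, hd⟩
  have hdisj : ∀ z ∈ s, z ∉ t := fun z hzs hzt =>
    (eq_empty_iff_forall_notMem.1 hd) z
      ⟨mem_iUnion₂.2 ⟨z, hzs, (T.dom_mem _ _ _ (hU z hzs)).2⟩,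
        mem_iUnion₂.2 ⟨z, hzt, (T.dom_mem _ _ _ (hV z hzt)).2⟩⟩
  have hx : x ∈ s ∪ t := hst ▸ T.subset_tr p {x} rfl
  rcases hx with hx | hx
  · exact hdisj b (tr_subset_of_separated hst hU hV hd (singleton_subset_iff.2 hx)
      (hst ▸ Or.inr hb)) hb
  · exact hdisj a ha (tr_subset_of_separated (hst.trans (union_comm s t)) hV hU
      ((inter_comm _ _).trans hd) (singleton_subset_iff.2 hx) (hst ▸ Or.inl ha))

end TypedSpace

/-- In a p-symmetrically typed space with least p-neighborhoods,
`p⊢C(x) = p⊢tr(x)`. -/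
theorem stmt_8 {X P : Type*} [TopologicalSpace X] [PartialOrder P]
    (T : TypedSpace X P) (p : P) (hsym : T.SymTyped p)
    (hleast : T.HasLeastNbhd p) (x : X) :
    T.Comp p x = T.tr p {x} := by
  exact Subset.antisymm
    (sUnion_subset fun _ hA => hA.2.subset_tr hsym hleast hA.1)
    (subset_sUnion_of_mem ⟨T.subset_tr p {x} rfl, T.connected_tr_singleton p x⟩)
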